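/- The set {f(002) : f ∈ A(Γ_{[2,1,2]}) and f(v) = 0 for all vertices v ∉ {002, 012, 212}} is exactly the ideal of S generated by x_1 x_2 and x_2². Moreover, this ideal ⟨x_1 x_2, x_2²⟩ of ℝ[x_1, x_2] is not a principal ideal. (This is the generating ideal I_(002) of the flow-up {002, 012, 212} of the vertex 002, the unique non-principal generating ideal in this example.) -/

import Mathlib

open MvPolynomial

/-- The polynomial ring `S = ℝ[x_1, x_2]`. -/
noncomputable abbrev S2 : Type := MvPolynomial (Fin 2) ℝ

/-- `x_1`. -/
noncomputable def x₁ : S2 := X 0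
/-- `x_2`. -/
noncomputable def x₂ : S2 := X 1

/-- Vertices of the graph `Γ_{[2,1,2]}`: triples `(ε₁, ε₂, ε₃)`, written as subwords
`000 = (0,0,0)`, `200 = (1,0,0)`, `010 = (0,1,0)`, `210 = (1,1,0)`, `002 = (0,0,1)`,
`202 = (1,0,1)`, `012 = (0,1,1)`, `212 = (1,1,1)`. -/
abbrev V3 : Type := Bool × Bool × Bool

/-- Label of an edge of `Γ_{[2,1,2]}` whose endpoints differ at position 1:
`s₂^{ε₃} s₁^{ε₂}(α₂)`, i.e. `x₂`, `x₁ + x₂`, `−x₂`, `x₁` as `(ε₂, ε₃)` runs over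
`(0,0)`, `(1,0)`, `(0,1)`, `(1,1)`. -/
noncomputable def lab1 (e₂ e₃ : Bool) : S2 :=
  if e₃ then (if e₂ then x₁ else -x₂) else (if e₂ then x₁ + x₂ else x₂)

/-- Label of an edge of `Γ_{[2,1,2]}` whose endpoints differ at position 2:
`s₂^{ε₃}(α₁)`, i.e. `x₁` if `ε₃ = 0` and `x₁ + x₂` if `ε₃ = 1`. -/
noncomputable def lab2 (e₃ : Bool) : S2 := if e₃ then x₁ + x₂ else x₁

/-- An assignment for the graph `Γ_{[2,1,2]}` in type `A_2`: a map `f : {0,1}³ → S` such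
that the label of each edge divides the difference of the values of `f` at its two
endpoints (edges whose endpoints differ at position 3 are labeled `α₂ = x₂`). -/
def IsAsgn212 (f : V3 → S2) : Prop :=
  (∀ e₂ e₃ : Bool, lab1 e₂ e₃ ∣ f (false, e₂, e₃) - f (true, e₂, e₃)) ∧
  (∀ e₁ e₃ : Bool, lab2 e₃ ∣ f (e₁, false, e₃) - f (e₁, true, e₃)) ∧
  (∀ e₁ e₂ : Bool, x₂ ∣ f (e₁, e₂, false) - f (e₁, e₂, true))

/-!
On the flow-up of `002` an assignment is a triple `a = f(002)`, `b = f(012)`, `c = f(212)`, and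
`a = (a - b) + (b - c) + c` runs along the path `002 — 012 — 212 — 202` to a vertex where `f`
vanishes. The edges of this path are labeled `α₁ + α₂`, `α₁`, `α₁ + α₂`, and all three values are
divisible by `α₂`, the label of the edges at position 3. Both path labels are relatively prime to
`α₂`, so every summand is divisible by `α₂` times its label, whence
`a ∈ ⟨α₂ α₁, α₂ (α₁ + α₂)⟩ = α₂ ⟨α₁, α₂⟩`. Cancelling `α₂`, this ideal is principal exactly when
`⟨α₁, α₂⟩` is, that is, when the relatively prime `α₁` and `α₂` generate the unit ideal; two
variables of a polynomial ring do not.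
-/

section Ideals

variable {R : Type*} [CommRing R] {x y : R}

theorem isPrincipal_span_singleton_mul_iff [IsDomain R] (hy : y ≠ 0) {I : Ideal R} :
    (Ideal.span {y} * I).IsPrincipal ↔ I.IsPrincipal := by
  constructor
  · rintro ⟨g, hg : Ideal.span {y} * I = Ideal.span {g}⟩
    obtain ⟨z, -, rfl⟩ : ∃ z ∈ I, y * z = g :=
      Ideal.mem_span_singleton_mul.mp (hg ▸ Ideal.mem_span_singleton_self g)
    rw [← Ideal.span_singleton_mul_span_singleton] at hg
    exact ⟨z, (Ideal.span_singleton_mul_right_inj hy).mp hg⟩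
  · rintro ⟨z, rfl⟩
    exact ⟨y * z, Ideal.span_singleton_mul_span_singleton y z⟩

theorem isPrincipal_span_pair_iff_isCoprime (h : IsRelPrime x y) :
    (Ideal.span {x, y}).IsPrincipal ↔ IsCoprime x y := by
  refine ⟨fun _ ↦ h.isCoprime, fun hxy ↦ ⟨1, ?_⟩⟩
  rw [Ideal.span_insert, ((Ideal.isCoprime_span_singleton_iff x y).mpr hxy).sup_eq]
  exact Ideal.span_singleton_one.symm

theorem span_mul_sq_eq_span_singleton_mul (x y : R) :
    Ideal.span {x * y, y ^ 2} = Ideal.span {y} * Ideal.span {x, y} := by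
  simp only [Ideal.span_insert, Ideal.mul_sup, Ideal.span_singleton_mul_span_singleton,
    mul_comm x, sq]

theorem isPrincipal_span_mul_sq_iff_isCoprime [IsDomain R] (h : IsRelPrime x y) :
    (Ideal.span {x * y, y ^ 2}).IsPrincipal ↔ IsCoprime x y := by
  rcases eq_or_ne y 0 with rfl | hy
  · have hx : IsUnit x := isRelPrime_zero_right.mp h
    simpa [isCoprime_zero_right, hx] using bot_isPrincipal (R := R) (M := R)
  · rw [span_mul_sq_eq_span_singleton_mul, isPrincipal_span_singleton_mul_iff hy,
      isPrincipal_span_pair_iff_isCoprime h]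

theorem mul_mem_span_mul_sq (x : R) {y z : R} (hz : z ∈ Ideal.span {x, y}) :
    y * z ∈ Ideal.span {x * y, y ^ 2} := by
  rw [span_mul_sq_eq_span_singleton_mul]
  exact Ideal.mul_mem_mul (Ideal.mem_span_singleton_self y) hz

end Ideals

section Variables

variable {σ R : Type*} [CommRing R] {i j : σ}

theorem isRelPrime_X_X [IsDomain R] (hij : i ≠ j) :
    IsRelPrime (X i : MvPolynomial σ R) (X j) :=
  X_prime.irreducible.isRelPrime_iff_not_dvd.mpr (mt X_dvd_X.mp hij)

theorem not_isCoprime_X_X [Nontrivial R] (i j : σ) :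
    ¬ IsCoprime (X i : MvPolynomial σ R) (X j) := fun h ↦ by
  simpa [isCoprime_zero_left] using h.map constantCoeff

end Variables

section FlowUp

variable {R : Type*} [CommRing R]

/-- The label of an edge of `Γ_{[2,1,2]}` at position 1, for simple roots `α₁`, `α₂` in an
arbitrary ring; it is `lab1` for `x₁`, `x₂`. -/
def edgeLabel₁ (α₁ α₂ : R) (e₂ e₃ : Bool) : R :=
  if e₃ then (if e₂ then α₁ else -α₂) else (if e₂ then α₁ + α₂ else α₂)

/-- The label of an edge of `Γ_{[2,1,2]}` at position 2, for simple roots `α₁`, `α₂` in an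
arbitrary ring; it is `lab2` for `x₁`, `x₂`. -/
def edgeLabel₂ (α₁ α₂ : R) (e₃ : Bool) : R := if e₃ then α₁ + α₂ else α₁

/-- Assignments for `Γ_{[2,1,2]}` with values in an arbitrary ring containing the simple roots
`α₁`, `α₂`; for `x₁`, `x₂` this is `IsAsgn212`. -/
def IsAssignment (α₁ α₂ : R) (f : V3 → R) : Prop :=
  (∀ e₂ e₃ : Bool, edgeLabel₁ α₁ α₂ e₂ e₃ ∣ f (false, e₂, e₃) - f (true, e₂, e₃)) ∧
  (∀ e₁ e₃ : Bool, edgeLabel₂ α₁ α₂ e₃ ∣ f (e₁, false, e₃) - f (e₁, true, e₃)) ∧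
  (∀ e₁ e₂ : Bool, α₂ ∣ f (e₁, e₂, false) - f (e₁, e₂, true))

/-- The flow-up `{002, 012, 212}` of the vertex `002`. -/
def flowUp002 : Set V3 := {(false, false, true), (false, true, true), (true, true, true)}

/-- The function on the vertices with values `a`, `b`, `c` at `002`, `012`, `212` and zero
elsewhere. -/
def flowUpFun (a b c : R) : V3 → R
  | (false, false, true) => a
  | (false, true, true) => b
  | (true, true, true) => c
  | _ => 0

theorem flowUpFun_eq_zero (a b c : R) {v : V3} (hv : v ∉ flowUp002) : flowUpFun a b c v = 0 := by
  rcases v with ⟨_ | _, _ | _, _ | _⟩ <;> simp_all [flowUp002, flowUpFun]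

theorem eq_flowUpFun {f : V3 → R} (hf : ∀ v ∉ flowUp002, f v = 0) :
    f = flowUpFun (f (false, false, true)) (f (false, true, true)) (f (true, true, true)) := by
  funext ⟨e₁, e₂, e₃⟩
  cases e₁ <;> cases e₂ <;> cases e₃ <;>
    first | rfl | exact hf _ (by simp [flowUp002])

theorem isAssignment_flowUpFun_iff {α₁ α₂ a b c : R} :
    IsAssignment α₁ α₂ (flowUpFun a b c) ↔
      (α₂ ∣ a ∧ α₂ ∣ b ∧ α₂ ∣ c) ∧ α₁ + α₂ ∣ a - b ∧ α₁ ∣ b - c ∧ α₁ + α₂ ∣ c := by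
  simp only [IsAssignment, edgeLabel₁, edgeLabel₂, flowUpFun, Bool.forall_bool,
    Bool.false_eq_true, ↓reduceIte, sub_self, dvd_zero, sub_zero, neg_dvd, true_and, zero_sub,
    dvd_neg]
  tauto

theorem exists_isAssignment_iff_exists_flowUpFun {α₁ α₂ a : R} :
    (∃ f : V3 → R, IsAssignment α₁ α₂ f ∧ (∀ v ∉ flowUp002, f v = 0) ∧
        a = f (false, false, true)) ↔
      ∃ b c, IsAssignment α₁ α₂ (flowUpFun a b c) := by
  constructor
  · rintro ⟨f, hf, hsupp, rfl⟩
    exact ⟨_, _, eq_flowUpFun hsupp ▸ hf⟩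
  · rintro ⟨b, c, h⟩
    exact ⟨flowUpFun a b c, h, fun _ ↦ flowUpFun_eq_zero a b c, rfl⟩

theorem mem_span_of_isAssignment_flowUpFun [DecompositionMonoid R] {α₁ α₂ a b c : R}
    (hα : IsRelPrime α₁ α₂) (h : IsAssignment α₁ α₂ (flowUpFun a b c)) :
    a ∈ Ideal.span {α₁ * α₂, α₂ ^ 2} := by
  obtain ⟨⟨ha, hb, hc⟩, hab, hbc, hc'⟩ := isAssignment_flowUpFun_iff.mp h
  have hα' : IsRelPrime α₂ (α₁ + α₂) := by simpa using hα.symm.add_mul_left_right 1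
  have mem_of_dvd {l d : R} (hl : IsRelPrime α₂ l) (hmem : l ∈ Ideal.span {α₁, α₂})
      (hd : α₂ ∣ d) (hld : l ∣ d) : d ∈ Ideal.span {α₁ * α₂, α₂ ^ 2} :=
    Ideal.mem_of_dvd _ (hl.mul_dvd hd hld) (mul_mem_span_mul_sq α₁ hmem)
  have hα₁ : α₁ ∈ Ideal.span {α₁, α₂} := Ideal.mem_span_pair.mpr ⟨1, 0, by ring⟩
  have hsum : α₁ + α₂ ∈ Ideal.span {α₁, α₂} := Ideal.mem_span_pair.mpr ⟨1, 1, by ring⟩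
  have path : a = (a - b) + (b - c) + c := by ring
  rw [path]
  exact add_mem (add_mem (mem_of_dvd hα' hsum (dvd_sub ha hb) hab)
    (mem_of_dvd hα.symm hα₁ (dvd_sub hb hc) hbc)) (mem_of_dvd hα' hsum hc hc')

theorem exists_isAssignment_flowUpFun_of_mem_span {α₁ α₂ a : R}
    (ha : a ∈ Ideal.span {α₁ * α₂, α₂ ^ 2}) :
    ∃ b c, IsAssignment α₁ α₂ (flowUpFun a b c) := by
  obtain ⟨p, q, rfl⟩ := Ideal.mem_span_pair.mp ha
  -- With `c = 0`, split `p α₁ α₂ + q α₂²` as `(p - q) α₁ α₂ + q α₂ (α₁ + α₂)`.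
  refine ⟨(p - q) * (α₁ * α₂), 0, isAssignment_flowUpFun_iff.mpr
    ⟨⟨⟨p * α₁ + q * α₂, ?_⟩, ⟨(p - q) * α₁, ?_⟩, dvd_zero α₂⟩,
      ⟨q * α₂, ?_⟩, ⟨(p - q) * α₂, ?_⟩, dvd_zero _⟩⟩ <;> ring

theorem flowup_ideal_002_general [IsDomain R] [DecompositionMonoid R] {α₁ α₂ : R}
    (hα : IsRelPrime α₁ α₂) :
    {a : R | ∃ f : V3 → R, IsAssignment α₁ α₂ f ∧ (∀ v ∉ flowUp002, f v = 0) ∧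
        a = f (false, false, true)} = ↑(Ideal.span {α₁ * α₂, α₂ ^ 2}) ∧
      ((Ideal.span {α₁ * α₂, α₂ ^ 2}).IsPrincipal ↔ IsCoprime α₁ α₂) := by
  refine ⟨Set.ext fun a ↦ exists_isAssignment_iff_exists_flowUpFun.trans ⟨?_, ?_⟩,
    isPrincipal_span_mul_sq_iff_isCoprime hα⟩
  · rintro ⟨b, c, h⟩
    exact mem_span_of_isAssignment_flowUpFun hα h
  · exact exists_isAssignment_flowUpFun_of_mem_span

end FlowUp

/-- The set of values at the vertex `002` of assignments for `Γ_{[2,1,2]}` supported on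
the flow-up `{002, 012, 212}` is exactly the ideal `⟨x₁x₂, x₂²⟩` of `ℝ[x₁, x₂]`;
moreover this ideal is not principal. -/
theorem flowup_ideal_002 :
    ({g : S2 | ∃ f : V3 → S2, IsAsgn212 f ∧
        (∀ v : V3, v ∉ ({(false, false, true), (false, true, true), (true, true, true)} :
          Set V3) → f v = 0) ∧ g = f (false, false, true)} =
      ↑(Ideal.span {x₁ * x₂, x₂ ^ 2})) ∧
    ¬ (Ideal.span {x₁ * x₂, x₂ ^ 2} : Ideal S2).IsPrincipal := by
  have general := flowup_ideal_002_general (isRelPrime_X_X (R := ℝ) (zero_ne_one (α := Fin 2)))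
  exact ⟨general.1, general.2.not.mpr (not_isCoprime_X_X 0 1)⟩
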